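/- arXiv:1610.03897 — 3 statements merged into one kernel-verified Lean document; each statement's English description precedes it below -/
import Mathlib

section
/- Let G = (V, E) be a finite simple graph with injective edge-weight function w, let F be a forest in G, and let C ⊆ V. Let e = {u, v} be an edge of G with exactly one endpoint in C, and suppose that either no edge of F has exactly one endpoint in C, or w(e) ≤ w(e*) where e* is the minimum-weight edge of F having exactly one endpoint in C. Then e is F-light. -/
/-- An edge `e` (as an element of `Sym2 V`) has exactly one endpoint in `C`. -/
def CrossesCut {V : Type} (C : Set V) (e : Sym2 V) : Prop :=
  ∃ a b : V, e = s(a, b) ∧ a ∈ C ∧ b ∉ C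

/-- `u` and `v` are `F`-light with respect to the weight function `w`:
either `u` and `v` lie in different components of the forest `F` (no path, so
`w_F(u,v) = ∞`), or the (unique) path between them in `F` contains an edge of
weight at least `w s(u,v)`. -/
def FLightPair {V : Type} (F : SimpleGraph V) (w : Sym2 V → ℝ) (u v : V) : Prop :=
  ∀ p : F.Path u v, ∃ e ∈ (p : F.Walk u v).edges, w s(u, v) ≤ w e

/-- An edge of `G` is `F`-light. -/
def FLight {V : Type} (F : SimpleGraph V) (w : Sym2 V → ℝ) (e : Sym2 V) : Prop :=
  ∀ u v : V, e = s(u, v) → FLightPair F w u v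

section

variable {V : Type} {F : SimpleGraph V} {C : Set V}

theorem exists_mem_edges_crossesCut_of_mem_of_notMem {u v : V}
    (p : F.Walk u v) (hu : u ∈ C) (hv : v ∉ C) :
    ∃ f ∈ p.edges, CrossesCut C f := by
  obtain ⟨d, hd, hfst, hsnd⟩ := p.exists_boundary_dart C hu hv
  exact ⟨d.edge, List.mem_map_of_mem hd, d.fst, d.snd, rfl, hfst, hsnd⟩

theorem CrossesCut.exists_mem_edges {u v : V} (h : CrossesCut C s(u, v)) (p : F.Walk u v) :
    ∃ f ∈ p.edges, CrossesCut C f := by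
  obtain ⟨a, b, hab, ha, hb⟩ := h
  rcases Sym2.eq_iff.mp hab with ⟨rfl, rfl⟩ | ⟨rfl, rfl⟩
  · exact exists_mem_edges_crossesCut_of_mem_of_notMem p ha hb
  · simpa only [SimpleGraph.Walk.edges_reverse, List.mem_reverse] using
      exists_mem_edges_crossesCut_of_mem_of_notMem p.reverse ha hb

theorem stmt_0_general {w : Sym2 V → ℝ} {e : Sym2 V} (he : CrossesCut C e)
    (hle : ∀ f ∈ F.edgeSet, CrossesCut C f → w e ≤ w f) :
    FLight F w e := by
  rintro u v rfl p
  obtain ⟨f, hfp, hfC⟩ := he.exists_mem_edges (p : F.Walk u v)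
  have hfF : f ∈ F.edgeSet := (p : F.Walk u v).edges_subset_edgeSet hfp
  exact ⟨f, hfp, hle f hfF hfC⟩

end

/-- If `e = {u,v}` is an edge of `G` with exactly one endpoint in `C`, and either no edge
of the forest `F` has exactly one endpoint in `C`, or `w e ≤ w e*` where `e*` is the
minimum-weight edge of `F` having exactly one endpoint in `C`, then `e` is `F`-light. -/
theorem stmt_0 {V : Type} [Fintype V] [DecidableEq V]
    (G F : SimpleGraph V) (w : Sym2 V → ℝ)
    (hw : Set.InjOn w G.edgeSet)
    (hFG : F ≤ G) (hFacyclic : F.IsAcyclic)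
    (C : Set V) (u v : V)
    (he : s(u, v) ∈ G.edgeSet) (huC : u ∈ C) (hvC : v ∉ C)
    (hmin :
      (¬ ∃ f ∈ F.edgeSet, CrossesCut C f) ∨
      (∃ estar, estar ∈ F.edgeSet ∧ CrossesCut C estar ∧
        (∀ f ∈ F.edgeSet, CrossesCut C f → w estar ≤ w f) ∧
        w s(u, v) ≤ w estar)) :
    FLight F w s(u, v) := by
  refine stmt_0_general ⟨u, v, rfl, huC, hvC⟩ fun f hf hfC => ?_
  exact hmin.elim (absurd ⟨f, hf, hfC⟩) fun ⟨_, _, _, hstar, hle⟩ => hle.trans (hstar f hf hfC)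
end

section
/- Let G = (V, E) be a finite simple graph with injective edge-weight function w, let F be a forest in G, and let P_1, …, P_T be a Borůvka partition sequence for F. Then the union, over all phases i ∈ {1, …, T} and all classes C of P_i, of the sets L_C equals exactly the set of F-light edges of G. -/
/-- `e` is the minimum-weight edge of `F` having exactly one endpoint in `C`
(the minimum weight outgoing edge, MWOE, of `C`). -/
def IsMWOE {V : Type} (F : SimpleGraph V) (w : Sym2 V → ℝ) (C : Set V) (e : Sym2 V) : Prop :=
  e ∈ F.edgeSet ∧ CrossesCut C e ∧ ∀ f ∈ F.edgeSet, CrossesCut C f → w e ≤ w f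

/-- Adjacency of two distinct classes `C`, `C'` of the partition `Pi` in the auxiliary
graph: one of them has an MWOE (recorded by `eC`) whose other endpoint lies in the other
class. -/
def AuxAdj {V : Type} (F : SimpleGraph V) (w : Sym2 V → ℝ) (Pi : Set (Set V))
    (eC : Set V → Sym2 V) (C C' : Set V) : Prop :=
  C ∈ Pi ∧ C' ∈ Pi ∧ C ≠ C' ∧
    (((∃ f, IsMWOE F w C f) ∧ ∃ x ∈ C', x ∈ eC C) ∨
     ((∃ f, IsMWOE F w C' f) ∧ ∃ x ∈ C, x ∈ eC C'))

/-- `P 0, P 1, …, P (T-1)` is a Borůvka partition sequence for the forest `F`, with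
`eC C` recording the MWOE of each class `C` that has one:
`P 0` is the partition into singletons; each `P i` is a partition of `V`; classes of
`P (i+1)` are unions of the classes of `P i` lying in the same connected component of
the auxiliary graph; and the classes of `P (T-1)` are exactly the vertex sets of the
connected components of `F`. -/
def IsBoruvkaSeq {V : Type} (F : SimpleGraph V) (w : Sym2 V → ℝ) (T : ℕ)
    (P : ℕ → Set (Set V)) (eC : Set V → Sym2 V) : Prop :=
  1 ≤ T ∧
  (∀ i < T, Setoid.IsPartition (P i)) ∧
  (P 0 = Set.range (fun v : V => ({v} : Set V))) ∧
  (∀ C : Set V, (∃ f, IsMWOE F w C f) → IsMWOE F w C (eC C)) ∧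
  (∀ i, i + 1 < T →
    P (i + 1) = { D | ∃ C ∈ P i,
      D = ⋃₀ { C' | C' ∈ P i ∧ Relation.ReflTransGen (AuxAdj F w (P i) eC) C C' } }) ∧
  (P (T - 1) = { D | ∃ v : V, D = { u | F.Reachable u v } })

/-- The set `L_C` of candidate edges of `G` for a class `C`: edges with exactly one
endpoint in `C`, of weight at most the weight of the MWOE of `C` if `C` has one
(and with no weight restriction if `C` has no MWOE). -/
def LSet {V : Type} (G F : SimpleGraph V) (w : Sym2 V → ℝ) (eC : Set V → Sym2 V)
    (C : Set V) : Set (Sym2 V) :=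
  { e | e ∈ G.edgeSet ∧ CrossesCut C e ∧ ((∃ f, IsMWOE F w C f) → w e ≤ w (eC C)) }

/-!
Fix a threshold `t` and let `H` be the graph of the edges of `F` lighter than `t`. An edge `s(u, v)`
of weight `t` is `F`-light exactly when `H` does not join `u` to `v`.

If `H` joins `u` to `v` and `s(u, v)` leaves a class `C`, then so does an edge of `H`; hence the
MWOE of `C` is lighter than `t` and `s(u, v) ∉ L_C`.

Conversely, the components of `H` that are split by a class `C` are tracked along the phases: every
class of every phase splits at most one of them. Indeed, follow the MWOEs from class to class. If
`C` splits the component `K`, its MWOE is an edge of `K`, so the next class splits `K` as well. As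
every class selects at most one other class, two classes that get merged lead to a common class,
so they cannot split different components. Suppose that no `L_C` contains the light edge `s(u, v)`.
As long as the classes of `u` and `v` are distinct, their MWOEs are lighter than `t`, so the class
of `u` splits the component of `u` and the class of `v` that of `v`. These components differ, so the
two classes are never merged. In the last phase, however, no class splits anything.
-/

/-- The subgraph of `F` formed by its edges of weight less than `t`. -/
def lighterSubgraph {V : Type} (F : SimpleGraph V) (w : Sym2 V → ℝ) (t : ℝ) : SimpleGraph V :=
  F.deleteEdges {e | t ≤ w e}

/-- The vertices of `C` with a neighbour in `H` outside `C`. It is nonempty exactly when `C` splits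
some component of `H`, and meets exactly the components of `H` that `C` splits. -/
def innerBoundary {V : Type} (H : SimpleGraph V) (C : Set V) : Set V :=
  {x ∈ C | ∃ y ∉ C, H.Adj x y}

/-- `C` splits at most one component of `H`, where a set splits a component if it contains some but
not all of its vertices. -/
def SplitsAtMostOne {V : Type} (H : SimpleGraph V) (C : Set V) : Prop :=
  ∀ x ∈ innerBoundary H C, ∀ y ∈ innerBoundary H C, H.Reachable x y

/-- The class `C` selects the class `C'` in the partition `Q`: the recorded edge `eC C` is an MWOE
of `C` and ends in `C'`. These are the edges of the auxiliary graph, oriented away from the class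
whose MWOE they come from. -/
def Selects {V : Type} (F : SimpleGraph V) (w : Sym2 V → ℝ) (Q : Set (Set V))
    (eC : Set V → Sym2 V) (C C' : Set V) : Prop :=
  C' ∈ Q ∧ ∃ a ∈ C, ∃ b ∈ C', b ∉ C ∧ eC C = s(a, b) ∧ IsMWOE F w C s(a, b)

theorem join_reflTransGen_of_rightUnique {α : Type*} {r s : α → α → Prop}
    (hr : Relator.RightUnique r) (hsr : ∀ a b, s a b → r a b ∨ r b a) {a b : α}
    (hab : Relation.ReflTransGen s a b) : Relation.Join (Relation.ReflTransGen r) a b := by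
  have hequiv : Equivalence (Relation.Join (Relation.ReflTransGen r)) :=
    Relation.equivalence_join_reflTransGen fun a b c hab hac =>
      ⟨b, .refl, hr hab hac ▸ .refl⟩
  induction hab with
  | refl => exact hequiv.refl a
  | @tail b c _ hbc ih =>
    refine hequiv.trans ih ?_
    rcases hsr b c hbc with h | h
    · exact ⟨c, .single h, .refl⟩
    · exact ⟨b, .refl, .single h⟩

section

variable {V : Type} {F G H : SimpleGraph V} {w : Sym2 V → ℝ} {eC : Set V → Sym2 V}
  {Q : Set (Set V)} {C C' D : Set V} {a b u v x y : V} {t : ℝ}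

theorem lighterSubgraph_adj : (lighterSubgraph F w t).Adj a b ↔ F.Adj a b ∧ w s(a, b) < t := by
  simp [lighterSubgraph]

theorem fLightPair_iff_not_reachable :
    FLightPair F w u v ↔ ¬ (lighterSubgraph F w (w s(u, v))).Reachable u v := by
  constructor
  · intro hlight hreach
    obtain ⟨p, hp⟩ := hreach.exists_isPath
    have hle : lighterSubgraph F w (w s(u, v)) ≤ F := F.deleteEdges_le _
    obtain ⟨e, he, hwe⟩ := hlight ⟨p.mapLe hle, hp.mapLe hle⟩
    rw [SimpleGraph.Walk.edges_mapLe_eq_edges] at he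
    induction e with
    | _ a b => exact (lighterSubgraph_adj.1 (p.adj_of_mem_edges he)).2.not_ge hwe
  · intro hreach p
    by_contra! hlighter
    exact hreach (p.1.toDeleteEdges _ fun e he => (hlighter e he).not_ge).reachable

theorem fLight_iff_not_reachable :
    FLight F w s(u, v) ↔ ¬ (lighterSubgraph F w (w s(u, v))).Reachable u v := by
  refine ⟨fun h => fLightPair_iff_not_reachable.1 (h u v rfl), fun h u' v' huv => ?_⟩
  rw [fLightPair_iff_not_reachable, ← huv]
  rcases Sym2.eq_iff.1 huv with ⟨rfl, rfl⟩ | ⟨rfl, rfl⟩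
  · exact h
  · exact mt SimpleGraph.Reachable.symm h

theorem CrossesCut.exists_isMWOE (hwF : (w '' F.edgeSet).IsWF) {f : Sym2 V}
    (hfF : f ∈ F.edgeSet) (hfC : CrossesCut C f) : ∃ g, IsMWOE F w C g := by
  let outgoing := {g ∈ F.edgeSet | CrossesCut C g}
  have hwf : (w '' outgoing).IsWF := hwF.mono (Set.image_mono (Set.sep_subset _ _))
  have hne : (w '' outgoing).Nonempty := ⟨w f, f, ⟨hfF, hfC⟩, rfl⟩
  obtain ⟨g, ⟨hgF, hgC⟩, hg⟩ := hwf.min_mem hne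
  exact ⟨g, hgF, hgC, fun h hhF hhC => hg.trans_le (hwf.min_le hne ⟨h, ⟨hhF, hhC⟩, rfl⟩)⟩

theorem fLight_of_mem_LSet (hwF : (w '' F.edgeSet).IsWF)
    (heC : ∀ C : Set V, (∃ f, IsMWOE F w C f) → IsMWOE F w C (eC C))
    {e : Sym2 V} (he : e ∈ LSet G F w eC C) : FLight F w e := by
  obtain ⟨-, ⟨u, v, rfl, hu, hv⟩, hle⟩ := he
  rw [fLight_iff_not_reachable]
  rintro ⟨p⟩
  obtain ⟨d, -, hfst, hsnd⟩ := p.exists_boundary_dart C hu hv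
  obtain ⟨hdF, hlt⟩ := lighterSubgraph_adj.1 d.adj
  have hdC : CrossesCut C s(d.fst, d.snd) := ⟨_, _, rfl, hfst, hsnd⟩
  have hex : ∃ f, IsMWOE F w C f := hdC.exists_isMWOE hwF hdF
  exact hlt.not_ge ((hle hex).trans ((heC C hex).2.2 _ hdF hdC))

theorem innerBoundary_nonempty_of_notMem_LSet
    (heC : ∀ C : Set V, (∃ f, IsMWOE F w C f) → IsMWOE F w C (eC C))
    {e : Sym2 V} (heG : e ∈ G.edgeSet) (hcross : CrossesCut C e) (he : e ∉ LSet G F w eC C) :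
    (innerBoundary (lighterSubgraph F w (w e)) C).Nonempty := by
  obtain ⟨hex, hlt⟩ : (∃ f, IsMWOE F w C f) ∧ w (eC C) < w e := by
    by_contra! hle
    exact he ⟨heG, hcross, hle⟩
  obtain ⟨hF, ⟨a, b, hab, ha, hb⟩, -⟩ := heC C hex
  rw [hab] at hF hlt
  exact ⟨a, ha, b, hb, lighterSubgraph_adj.2 ⟨hF, hlt⟩⟩

theorem mem_innerBoundary_of_subset (hCD : C ⊆ D) (hxC : x ∈ C) (hx : x ∈ innerBoundary H D) :
    x ∈ innerBoundary H C := by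
  obtain ⟨-, y, hyD, hxy⟩ := hx
  exact ⟨hxC, y, fun hyC => hyD (hCD hyC), hxy⟩

theorem selects_rightUnique (hQ : Setoid.IsPartition Q) :
    Relator.RightUnique (Selects F w Q eC) := by
  rintro C C₁ C₂ ⟨hC₁, a₁, ha₁, b₁, hb₁, -, he₁, -⟩ ⟨hC₂, a₂, -, b₂, hb₂, hb₂C, he₂, -⟩
  rcases Sym2.eq_iff.1 (he₁.symm.trans he₂) with ⟨-, rfl⟩ | ⟨rfl, -⟩
  · exact Setoid.eq_of_mem_eqv_class hQ.2 hC₁ hb₁ hC₂ hb₂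
  · exact absurd ha₁ hb₂C

theorem selects_of_exists_mem (hQ : Setoid.IsPartition Q)
    (heC : ∀ C : Set V, (∃ f, IsMWOE F w C f) → IsMWOE F w C (eC C))
    (hC : C ∈ Q) (hC' : C' ∈ Q) (hne : C ≠ C') (hex : ∃ f, IsMWOE F w C f)
    (hend : ∃ x ∈ C', x ∈ eC C) : Selects F w Q eC C C' := by
  have hmwoe := heC C hex
  obtain ⟨a, b, hab, ha, hb⟩ := hmwoe.2.1
  obtain ⟨x, hx, hxe⟩ := hend
  rw [hab, Sym2.mem_iff] at hxe
  rcases hxe with rfl | rfl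
  · exact absurd (Setoid.eq_of_mem_eqv_class hQ.2 hC ha hC' hx) hne
  · exact ⟨hC', a, ha, x, hx, hb, hab, hab ▸ hmwoe⟩

theorem AuxAdj.selects_or_selects (hQ : Setoid.IsPartition Q)
    (heC : ∀ C : Set V, (∃ f, IsMWOE F w C f) → IsMWOE F w C (eC C))
    (h : AuxAdj F w Q eC C C') : Selects F w Q eC C C' ∨ Selects F w Q eC C' C := by
  obtain ⟨hC, hC', hne, ⟨hex, hend⟩ | ⟨hex, hend⟩⟩ := h
  · exact .inl (selects_of_exists_mem hQ heC hC hC' hne hex hend)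
  · exact .inr (selects_of_exists_mem hQ heC hC' hC hne.symm hex hend)

theorem AuxAdj.symm (h : AuxAdj F w Q eC C C') : AuxAdj F w Q eC C' C :=
  ⟨h.2.1, h.1, h.2.2.1.symm, h.2.2.2.symm⟩

theorem Selects.exists_reachable_innerBoundary (hQ : Setoid.IsPartition Q)
    (hsel : Selects F w Q eC C C') (hC : C ∈ Q)
    (hsplit : SplitsAtMostOne (lighterSubgraph F w t) C)
    (hx : x ∈ innerBoundary (lighterSubgraph F w t) C) :
    ∃ y ∈ innerBoundary (lighterSubgraph F w t) C', (lighterSubgraph F w t).Reachable x y := by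
  obtain ⟨hC', a, ha, b, hb, hbC, -, hmwoe⟩ := hsel
  have haC' : a ∉ C' := fun haC' =>
    hbC (Setoid.eq_of_mem_eqv_class hQ.2 hC ha hC' haC' ▸ hb)
  have hab : (lighterSubgraph F w t).Adj a b := by
    obtain ⟨hxC, z, hzC, hxz⟩ := hx
    rw [lighterSubgraph_adj] at hxz ⊢
    exact ⟨hmwoe.1, (hmwoe.2.2 s(x, z) hxz.1 ⟨x, z, rfl, hxC, hzC⟩).trans_lt hxz.2⟩
  exact ⟨b, ⟨hb, a, haC', hab.symm⟩, (hsplit x hx a ⟨ha, b, hbC, hab⟩).trans hab.reachable⟩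

theorem exists_reachable_innerBoundary_of_reflTransGen_selects (hQ : Setoid.IsPartition Q)
    (hsplit : ∀ C ∈ Q, SplitsAtMostOne (lighterSubgraph F w t) C) (hC : C ∈ Q)
    (hsel : Relation.ReflTransGen (Selects F w Q eC) C C')
    (hx : x ∈ innerBoundary (lighterSubgraph F w t) C) :
    C' ∈ Q ∧
      ∃ y ∈ innerBoundary (lighterSubgraph F w t) C', (lighterSubgraph F w t).Reachable x y := by
  induction hsel with
  | refl => exact ⟨hC, x, hx, .refl x⟩
  | tail _ hstep ih =>
    obtain ⟨hmem, y, hy, hxy⟩ := ih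
    obtain ⟨z, hz, hyz⟩ := hstep.exists_reachable_innerBoundary hQ hmem (hsplit _ hmem) hy
    exact ⟨hstep.1, z, hz, hxy.trans hyz⟩

theorem reachable_of_join_selects (hQ : Setoid.IsPartition Q)
    (hsplit : ∀ C ∈ Q, SplitsAtMostOne (lighterSubgraph F w t) C) (hC : C ∈ Q) (hC' : C' ∈ Q)
    (hjoin : Relation.Join (Relation.ReflTransGen (Selects F w Q eC)) C C')
    (hx : x ∈ innerBoundary (lighterSubgraph F w t) C)
    (hy : y ∈ innerBoundary (lighterSubgraph F w t) C') :
    (lighterSubgraph F w t).Reachable x y := by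
  obtain ⟨D, hCD, hCD'⟩ := hjoin
  obtain ⟨hD, x', hx', hxx'⟩ :=
    exists_reachable_innerBoundary_of_reflTransGen_selects hQ hsplit hC hCD hx
  obtain ⟨-, y', hy', hyy'⟩ :=
    exists_reachable_innerBoundary_of_reflTransGen_selects hQ hsplit hC' hCD' hy
  exact hxx'.trans ((hsplit D hD x' hx' y' hy').trans hyy'.symm)

end

namespace IsBoruvkaSeq

variable {V : Type} {F G : SimpleGraph V} {w : Sym2 V → ℝ} {T : ℕ} {P : ℕ → Set (Set V)}
  {eC : Set V → Sym2 V} {C C' D : Set V} {i : ℕ} {x y z : V} {t : ℝ}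

theorem isPartition (hB : IsBoruvkaSeq F w T P eC) (hi : i < T) : Setoid.IsPartition (P i) :=
  hB.2.1 i hi

theorem isMWOE (hB : IsBoruvkaSeq F w T P eC) (C : Set V) (hC : ∃ f, IsMWOE F w C f) :
    IsMWOE F w C (eC C) :=
  hB.2.2.2.1 C hC

theorem eq_singleton_of_mem_zero (hB : IsBoruvkaSeq F w T P eC) (hC : C ∈ P 0) (hx : x ∈ C) :
    C = {x} := by
  rw [hB.2.2.1] at hC
  obtain ⟨y, rfl⟩ := hC
  rw [Set.mem_singleton_iff.1 hx]

theorem innerBoundary_eq_empty_of_mem_last (hB : IsBoruvkaSeq F w T P eC) (hC : C ∈ P (T - 1)) :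
    innerBoundary (lighterSubgraph F w t) C = ∅ := by
  rw [hB.2.2.2.2.2] at hC
  obtain ⟨z, rfl⟩ := hC
  rw [Set.eq_empty_iff_forall_notMem]
  rintro x ⟨hxz, y, hyz, hxy⟩
  exact hyz ((lighterSubgraph_adj.1 hxy).1.symm.reachable.trans hxz)

theorem exists_mem_subset_of_mem_succ (hB : IsBoruvkaSeq F w T P eC) (hi : i + 1 < T)
    (hD : D ∈ P (i + 1)) (hx : x ∈ D) : ∃ C ∈ P i, x ∈ C ∧ C ⊆ D := by
  rw [hB.2.2.2.2.1 i hi] at hD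
  obtain ⟨B, -, rfl⟩ := hD
  obtain ⟨C, hC, hxC⟩ := hx
  exact ⟨C, hC.1, hxC, Set.subset_sUnion_of_mem hC⟩

theorem join_selects_of_subset (hB : IsBoruvkaSeq F w T P eC) (hi : i + 1 < T)
    (hD : D ∈ P (i + 1)) (hC : C ∈ P i) (hCD : C ⊆ D) (hC' : C' ∈ P i) (hCD' : C' ⊆ D) :
    Relation.Join (Relation.ReflTransGen (Selects F w (P i) eC)) C C' := by
  have hQ := hB.isPartition (i.lt_succ_self.trans hi)
  rw [hB.2.2.2.2.1 i hi] at hD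
  obtain ⟨B, -, rfl⟩ := hD
  have hlinked : ∀ A ∈ P i,
      A ⊆ ⋃₀ {A' | A' ∈ P i ∧ Relation.ReflTransGen (AuxAdj F w (P i) eC) B A'} →
      Relation.ReflTransGen (AuxAdj F w (P i) eC) B A := by
    intro A hA hsub
    obtain ⟨x, hx⟩ := Setoid.nonempty_of_mem_partition hQ hA
    obtain ⟨A', ⟨hA', hBA'⟩, hxA'⟩ := hsub hx
    exact Setoid.eq_of_mem_eqv_class hQ.2 hA' hxA' hA hx ▸ hBA'
  have hsymm : Std.Symm (AuxAdj F w (P i) eC) := ⟨fun _ _ => AuxAdj.symm⟩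
  exact join_reflTransGen_of_rightUnique (selects_rightUnique hQ)
    (fun _ _ => AuxAdj.selects_or_selects hQ hB.isMWOE)
    ((symm (hlinked C hC hCD)).trans (hlinked C' hC' hCD'))

theorem reachable_of_subset (hB : IsBoruvkaSeq F w T P eC) (hi : i + 1 < T)
    (hsplit : ∀ C ∈ P i, SplitsAtMostOne (lighterSubgraph F w t) C)
    (hD : D ∈ P (i + 1)) (hC : C ∈ P i) (hCD : C ⊆ D) (hC' : C' ∈ P i) (hCD' : C' ⊆ D)
    (hx : x ∈ innerBoundary (lighterSubgraph F w t) C)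
    (hy : y ∈ innerBoundary (lighterSubgraph F w t) C') :
    (lighterSubgraph F w t).Reachable x y :=
  reachable_of_join_selects (hB.isPartition (i.lt_succ_self.trans hi)) hsplit hC hC'
    (hB.join_selects_of_subset hi hD hC hCD hC' hCD') hx hy

theorem splitsAtMostOne (hB : IsBoruvkaSeq F w T P eC) (t : ℝ) (hi : i < T) :
    ∀ C ∈ P i, SplitsAtMostOne (lighterSubgraph F w t) C := by
  induction i with
  | zero =>
    intro C hC x hx y hy
    rw [hB.eq_singleton_of_mem_zero hC hx.1] at hy
    rw [Set.mem_singleton_iff.1 hy.1]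
  | succ i ih =>
    intro D hD x hx y hy
    obtain ⟨C, hC, hxC, hCD⟩ := hB.exists_mem_subset_of_mem_succ hi hD hx.1
    obtain ⟨C', hC', hyC', hCD'⟩ := hB.exists_mem_subset_of_mem_succ hi hD hy.1
    exact hB.reachable_of_subset hi (ih (i.lt_succ_self.trans hi)) hD hC hCD hC' hCD'
      (mem_innerBoundary_of_subset hCD hxC hx) (mem_innerBoundary_of_subset hCD' hyC' hy)

theorem forall_reachable_of_subset (hB : IsBoruvkaSeq F w T P eC) (hi : i + 1 < T)
    (hD : D ∈ P (i + 1)) (hC : C ∈ P i) (hCD : C ⊆ D)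
    (hne : (innerBoundary (lighterSubgraph F w t) C).Nonempty)
    (hz : ∀ x ∈ innerBoundary (lighterSubgraph F w t) C, (lighterSubgraph F w t).Reachable z x) :
    ∀ x ∈ innerBoundary (lighterSubgraph F w t) D, (lighterSubgraph F w t).Reachable z x := by
  intro x hx
  obtain ⟨x₀, hx₀⟩ := hne
  obtain ⟨C', hC', hxC', hCD'⟩ := hB.exists_mem_subset_of_mem_succ hi hD hx.1
  have hsplit := hB.splitsAtMostOne t (i.lt_succ_self.trans hi)
  exact (hz x₀ hx₀).trans (hB.reachable_of_subset hi hsplit hD hC hCD hC' hCD' hx₀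
    (mem_innerBoundary_of_subset hCD' hxC' hx))

theorem crossesCut_and_forall_reachable (hB : IsBoruvkaSeq F w T P eC) {e : Sym2 V}
    (heG : e ∈ G.edgeSet) (hlight : FLight F w e)
    (hnot : ∀ i < T, ∀ C ∈ P i, e ∉ LSet G F w eC C) (hi : i < T) :
    ∀ C ∈ P i, ∀ z ∈ e, z ∈ C → CrossesCut C e ∧
      ∀ x ∈ innerBoundary (lighterSubgraph F w (w e)) C,
        (lighterSubgraph F w (w e)).Reachable z x := by
  induction i with
  | zero =>
    rintro C hC z ⟨z', rfl⟩ hz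
    rw [hB.eq_singleton_of_mem_zero hC hz]
    refine ⟨⟨z, z', rfl, rfl, ?_⟩, ?_⟩
    · rintro rfl
      exact fLight_iff_not_reachable.1 hlight (.refl z')
    · rintro x ⟨rfl, -⟩
      exact .refl x
  | succ i ih =>
    have hi' : i < T := i.lt_succ_self.trans hi
    have hne : ∀ C ∈ P i, ∀ z ∈ e, z ∈ C →
        (innerBoundary (lighterSubgraph F w (w e)) C).Nonempty := fun C hC z hze hz =>
      innerBoundary_nonempty_of_notMem_LSet hB.isMWOE heG (ih hi' C hC z hze hz).1 (hnot i hi' C hC)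
    intro D hD z hze hzD
    obtain ⟨C, hC, hzC, hCD⟩ := hB.exists_mem_subset_of_mem_succ hi hD hzD
    have hz := (ih hi' C hC z hze hzC).2
    refine ⟨?_, hB.forall_reachable_of_subset hi hD hC hCD (hne C hC z hze hzC) hz⟩
    obtain ⟨x, hx⟩ := hne C hC z hze hzC
    obtain ⟨z', rfl⟩ := hze
    refine ⟨z, z', rfl, hzD, fun hz'D => fLight_iff_not_reachable.1 hlight ?_⟩
    have hz'e : z' ∈ s(z, z') := Sym2.mem_mk_right z z'
    obtain ⟨C', hC', hz'C', hCD'⟩ := hB.exists_mem_subset_of_mem_succ hi hD hz'D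
    obtain ⟨y, hy⟩ := hne C' hC' z' hz'e hz'C'
    have hxy := hB.reachable_of_subset hi (hB.splitsAtMostOne _ hi') hD hC hCD hC' hCD' hx hy
    exact (hz x hx).trans (hxy.trans ((ih hi' C' hC' z' hz'e hz'C').2 y hy).symm)

theorem exists_mem_LSet_of_fLight (hB : IsBoruvkaSeq F w T P eC) {e : Sym2 V}
    (heG : e ∈ G.edgeSet) (hlight : FLight F w e) :
    ∃ i < T, ∃ C ∈ P i, e ∈ LSet G F w eC C := by
  by_contra! hnot
  have hlast : T - 1 < T := Nat.sub_one_lt_of_lt hB.1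
  obtain ⟨C, hC, z, hze, hzC⟩ : ∃ C ∈ P (T - 1), ∃ z ∈ e, z ∈ C := by
    induction e with
    | _ u v =>
      obtain ⟨C, ⟨hC, huC⟩, -⟩ := (hB.isPartition hlast).2 u
      exact ⟨C, hC, u, Sym2.mem_mk_left u v, huC⟩
  have hcross : CrossesCut C e :=
    (hB.crossesCut_and_forall_reachable heG hlight hnot hlast C hC z hze hzC).1
  exact (innerBoundary_nonempty_of_notMem_LSet hB.isMWOE heG hcross (hnot _ hlast C hC)).ne_empty
    (hB.innerBoundary_eq_empty_of_mem_last hC)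

end IsBoruvkaSeq

theorem stmt_1_general {V : Type} (G F : SimpleGraph V) (w : Sym2 V → ℝ)
    (hwF : (w '' F.edgeSet).IsWF) (T : ℕ) (P : ℕ → Set (Set V)) (eC : Set V → Sym2 V)
    (hB : IsBoruvkaSeq F w T P eC) :
    (⋃ i ∈ Finset.range T, ⋃ C ∈ P i, LSet G F w eC C)
      = { e | e ∈ G.edgeSet ∧ FLight F w e } := by
  ext e
  simp only [Set.mem_iUnion, Finset.mem_range, exists_prop, Set.mem_ofPred_eq]
  constructor
  · rintro ⟨i, -, C, -, he⟩
    exact ⟨he.1, fLight_of_mem_LSet hwF hB.isMWOE he⟩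
  · rintro ⟨heG, hlight⟩
    exact hB.exists_mem_LSet_of_fLight heG hlight

/-- The union of the sets `L_C` over all phases `i` and all classes `C` of `P i` of a
Borůvka partition sequence for a forest `F` in `G` is exactly the set of `F`-light
edges of `G`. -/
theorem stmt_1 {V : Type} [Fintype V] [DecidableEq V]
    (G F : SimpleGraph V) (w : Sym2 V → ℝ)
    (hw : Set.InjOn w G.edgeSet)
    (hFG : F ≤ G) (hFacyclic : F.IsAcyclic)
    (T : ℕ) (P : ℕ → Set (Set V)) (eC : Set V → Sym2 V)
    (hB : IsBoruvkaSeq F w T P eC) :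
    (⋃ i ∈ Finset.range T, ⋃ C ∈ P i, LSet G F w eC C)
      = { e | e ∈ G.edgeSet ∧ FLight F w e } := by
  exact stmt_1_general G F w (Set.toFinite _).isWF T P eC hB
end

section
/- Let n ≥ 2 be an integer and let ε be a real number with 0 < ε ≤ 1 and n^{ε} ≥ 2. Let a, b ≥ 0 and c ≥ 1 be real numbers, and let f : ℕ → ℝ satisfy: f(m) ≤ b for every m ≤ c·n^{1+ε}, and f(m) ≤ f(⌈m/n^{ε}⌉) + a for every m > c·n^{1+ε}. Then for every m ≤ n², f(m) ≤ b + a·⌈1/ε⌉. -/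
/-!
Rounding up at every step of `m ↦ ⌈m / q⌉` costs at most the geometric series
`1 + 1/q + 1/q² + ⋯ = q / (q - 1)`, so `k` steps take `m` to at most `m / q ^ k + q / (q - 1)`.
For `q = n ^ ε ≥ 2` and `k = ⌈1 / ε⌉` we have `q ^ k ≥ n`, hence `m ≤ n²` is taken to at most
`n + 2 ≤ n * q ≤ c * n ^ (1 + ε)`, where the recursion has stopped.
-/

theorem le_add_nsmul_of_iterate {M : Type*} [AddCommMonoid M] [PartialOrder M]
    [IsOrderedAddMonoid M] {α : Type*} {p : α → Prop} {g : α → α} {f : α → M} {a b : M}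
    (ha : 0 ≤ a) (hbase : ∀ x, p x → f x ≤ b) (hrec : ∀ x, ¬p x → f x ≤ f (g x) + a)
    {k : ℕ} {x : α} (hk : p (g^[k] x)) : f x ≤ b + k • a := by
  induction k generalizing x with
  | zero => simpa using hbase x hk
  | succ k ih =>
    by_cases hx : p x
    · exact (hbase x hx).trans (le_add_of_nonneg_right (nsmul_nonneg ha _))
    · calc
        f x ≤ f (g x) + a := hrec x hx
        _ ≤ b + k • a + a := by gcongr; exact ih hk
        _ = b + (k + 1) • a := by rw [succ_nsmul, add_assoc]

theorem iterate_ceil_div_le {K : Type*} [Field K] [LinearOrder K] [IsStrictOrderedRing K]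
    [FloorSemiring K] {q : K} (hq : 1 < q) (m k : ℕ) :
    (((fun i : ℕ ↦ ⌈(i : K) / q⌉₊)^[k] m : ℕ) : K) ≤ m / q ^ k + q / (q - 1) := by
  have hq0 : 0 < q := one_pos.trans hq
  have hq1 : 0 < q - 1 := sub_pos.2 hq
  induction k with
  | zero => simpa using (div_pos hq0 hq1).le
  | succ k ih =>
    rw [Function.iterate_succ_apply']
    set j := (fun i : ℕ ↦ ⌈(i : K) / q⌉₊)^[k] m
    calc
      (⌈(j : K) / q⌉₊ : K) ≤ j / q + 1 := (Nat.ceil_lt_add_one (by positivity)).le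
      _ ≤ (m / q ^ k + q / (q - 1)) / q + 1 := by gcongr
      _ = m / q ^ (k + 1) + q / (q - 1) := by field_simp; ring

theorem le_rpow_pow_ceil_one_div {x ε : ℝ} (hx : 1 ≤ x) (hε : 0 < ε) :
    x ≤ (x ^ ε) ^ ⌈1 / ε⌉₊ := by
  rw [← Real.rpow_mul_natCast (zero_le_one.trans hx)]
  exact Real.self_le_rpow_of_one_le hx ((div_le_iff₀' hε).1 (Nat.le_ceil (1 / ε)))

theorem iterate_ceil_div_rpow_le_rpow_one_add {x ε : ℝ} (hx : 2 ≤ x) (hε : 0 < ε)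
    (hxε : 2 ≤ x ^ ε) {m : ℕ} (hm : (m : ℝ) ≤ x ^ 2) :
    (((fun i : ℕ ↦ ⌈(i : ℝ) / x ^ ε⌉₊)^[⌈1 / ε⌉₊] m : ℕ) : ℝ) ≤ x ^ (1 + ε) := by
  have hx0 : 0 < x := two_pos.trans_le hx
  have hquot : (m : ℝ) / (x ^ ε) ^ ⌈1 / ε⌉₊ ≤ x := by
    calc
      (m : ℝ) / (x ^ ε) ^ ⌈1 / ε⌉₊ ≤ x ^ 2 / x := by
        gcongr
        exact le_rpow_pow_ceil_one_div (one_le_two.trans hx) hε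
      _ = x := by field_simp
  have hround : x ^ ε / (x ^ ε - 1) ≤ 2 := by
    rw [div_le_iff₀ (by linarith)]
    linarith
  calc
    _ ≤ (m : ℝ) / (x ^ ε) ^ ⌈1 / ε⌉₊ + x ^ ε / (x ^ ε - 1) :=
      iterate_ceil_div_le (one_lt_two.trans_le hxε) m _
    _ ≤ x + 2 := add_le_add hquot hround
    _ ≤ x * 2 := by linarith
    _ ≤ x * x ^ ε := by gcongr
    _ = x ^ (1 + ε) := by rw [Real.rpow_add hx0, Real.rpow_one]

theorem stmt_16_general {M : Type*} [AddCommMonoid M] [PartialOrder M] [IsOrderedAddMonoid M]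
    {x ε c : ℝ} (hx : 2 ≤ x) (hε : 0 < ε) (hxε : 2 ≤ x ^ ε) (hc : 1 ≤ c)
    {a b : M} (ha : 0 ≤ a) {f : ℕ → M}
    (hbase : ∀ m : ℕ, (m : ℝ) ≤ c * x ^ (1 + ε) → f m ≤ b)
    (hrec : ∀ m : ℕ, c * x ^ (1 + ε) < (m : ℝ) → f m ≤ f ⌈(m : ℝ) / x ^ ε⌉₊ + a)
    {m : ℕ} (hm : (m : ℝ) ≤ x ^ 2) : f m ≤ b + ⌈1 / ε⌉₊ • a := by
  refine le_add_nsmul_of_iterate ha hbase (fun i hi ↦ hrec i (not_le.1 hi)) ?_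
  exact (iterate_ceil_div_rpow_le_rpow_one_add hx hε hxε hm).trans
    (le_mul_of_one_le_left (by positivity) hc)

/-- Recurrence for the round complexity of the recursive algorithm MST-v2: if
`n ≥ 2`, `0 < ε ≤ 1` with `n^ε ≥ 2`, `a, b ≥ 0`, `c ≥ 1`, and `f : ℕ → ℝ` satisfies
`f(m) ≤ b` for every `m ≤ c·n^(1+ε)` and `f(m) ≤ f(⌈m/n^ε⌉) + a` for every
`m > c·n^(1+ε)`, then `f(m) ≤ b + a·⌈1/ε⌉` for every `m ≤ n²`. -/
theorem stmt_16 (n : ℕ) (hn : 2 ≤ n) (ε : ℝ) (hε0 : 0 < ε) (hε1 : ε ≤ 1)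
    (hnε : 2 ≤ (n : ℝ) ^ ε)
    (a b c : ℝ) (ha : 0 ≤ a) (hb : 0 ≤ b) (hc : 1 ≤ c)
    (f : ℕ → ℝ)
    (hbase : ∀ m : ℕ, (m : ℝ) ≤ c * (n : ℝ) ^ ((1 : ℝ) + ε) → f m ≤ b)
    (hrec : ∀ m : ℕ, c * (n : ℝ) ^ ((1 : ℝ) + ε) < (m : ℝ) →
      f m ≤ f ⌈(m : ℝ) / (n : ℝ) ^ ε⌉₊ + a) :
    ∀ m : ℕ, m ≤ n ^ 2 → f m ≤ b + a * (⌈1 / ε⌉₊ : ℝ) := by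
  intro m hm
  simpa only [nsmul_eq_mul, mul_comm] using
    stmt_16_general (mod_cast hn) hε0 hnε hc ha hbase hrec (m := m) (mod_cast hm)
end
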